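/- arXiv:2307.00684 — 4 statements merged into one kernel-verified Lean document; each statement's English description precedes it below -/
import Mathlib

section
/- (Sufficient decrease, Lemma 3, main inequality) For every t, one step of the proximal network-slimming iteration satisfies F(Z^{t+1}) − F(Z^t) ≤ ((L − α)/2)·‖Z^{t+1} − Z^t‖₂². -/
noncomputable section

/-- Concatenation `W̃ = (W, γ)` of `W ∈ ℝⁿ` and `γ ∈ ℝᶜ` into a single Euclidean vector. -/
def pairWγ {n c : ℕ} (W : EuclideanSpace ℝ (Fin n)) (γ : EuclideanSpace ℝ (Fin c)) :
    EuclideanSpace ℝ (Fin n ⊕ Fin c) :=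
  (EuclideanSpace.equiv (Fin n ⊕ Fin c) ℝ).symm (Sum.elim (fun i => W i) (fun j => γ j))

/-- Partial gradient `∇_W L̃(W, γ)`. -/
def gradW {n c : ℕ} (Lt : EuclideanSpace ℝ (Fin n ⊕ Fin c) → ℝ)
    (W : EuclideanSpace ℝ (Fin n)) (γ : EuclideanSpace ℝ (Fin c)) : EuclideanSpace ℝ (Fin n) :=
  (EuclideanSpace.equiv (Fin n) ℝ).symm (fun i => gradient Lt (pairWγ W γ) (Sum.inl i))

/-- Partial gradient `∇_γ L̃(W, γ)`. -/
def gradG {n c : ℕ} (Lt : EuclideanSpace ℝ (Fin n ⊕ Fin c) → ℝ)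
    (W : EuclideanSpace ℝ (Fin n)) (γ : EuclideanSpace ℝ (Fin c)) : EuclideanSpace ℝ (Fin c) :=
  (EuclideanSpace.equiv (Fin c) ℝ).symm (fun j => gradient Lt (pairWγ W γ) (Sum.inr j))

/-- Soft-thresholding operator `(S(x, τ))_i = sign(x_i) · max{0, |x_i| − τ}`. -/
def softThresh {c : ℕ} (x : EuclideanSpace ℝ (Fin c)) (τ : ℝ) : EuclideanSpace ℝ (Fin c) :=
  (EuclideanSpace.equiv (Fin c) ℝ).symm (fun i => Real.sign (x i) * max 0 (|x i| - τ))

/-- The objective `F(W, γ, ξ) = L̃(W, γ) + λ‖ξ‖₁ + (β/2)‖γ − ξ‖₂²`. -/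
def objF {n c : ℕ} (Lt : EuclideanSpace ℝ (Fin n ⊕ Fin c) → ℝ) (lam β : ℝ)
    (W : EuclideanSpace ℝ (Fin n)) (γ ξ : EuclideanSpace ℝ (Fin c)) : ℝ :=
  Lt (pairWγ W γ) + lam * (∑ i, |ξ i|) + β / 2 * ‖γ - ξ‖ ^ 2

theorem aux_soft (x τ y : ℝ) (hτ : 0 < τ) :
    τ * |Real.sign x * max 0 (|x| - τ)| + (Real.sign x * max 0 (|x| - τ) - x) ^ 2 / 2
      ≤ τ * |y| + (y - x) ^ 2 / 2 := by
  have h1 := le_abs_self y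
  have h2 := neg_abs_le y
  have h0 := abs_nonneg y
  have h3 : |y| ^ 2 = y ^ 2 := sq_abs y
  rcases lt_trichotomy x 0 with hx | hx | hx
  · rw [Real.sign_of_neg hx, abs_of_neg hx]
    rcases le_total (-x - τ) 0 with h | h
    · rw [max_eq_left h]; simp only [mul_zero, abs_zero]
      nlinarith [sq_nonneg y]
    · rw [max_eq_right h, abs_of_nonpos (by linarith)]
      nlinarith [sq_nonneg (y - x - τ)]
  · subst hx
    simp only [Real.sign_zero, zero_mul, abs_zero, mul_zero]
    nlinarith [mul_nonneg hτ.le h0, sq_nonneg y]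
  · rw [Real.sign_of_pos hx, abs_of_pos hx]
    rcases le_total (x - τ) 0 with h | h
    · rw [max_eq_left h]; simp only [mul_zero, abs_zero]
      nlinarith [sq_nonneg y]
    · rw [max_eq_right h, abs_of_nonneg (by linarith)]
      nlinarith [sq_nonneg (y - x + τ)]

theorem aux_xi (α β lam g z : ℝ) (hα : 0 < α) (hβ : 0 < β) (hl : 0 < lam) (s : ℝ)
    (hs : s = Real.sign (1 / (α + β) * (α * z + β * g)) *
      max 0 (|1 / (α + β) * (α * z + β * g)| - lam / (α + β))) :
    lam * |s| + β / 2 * (g - s) ^ 2 + α / 2 * (s - z) ^ 2 ≤ lam * |z| + β / 2 * (g - z) ^ 2 := by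
  have hp : 0 < α + β := by linarith
  have h := aux_soft (1 / (α + β) * (α * z + β * g)) (lam / (α + β)) z (div_pos hl hp)
  rw [← hs] at h
  obtain ⟨x, hx⟩ : ∃ x, x = 1 / (α + β) * (α * z + β * g) := ⟨_, rfl⟩
  obtain ⟨τ, hτ⟩ : ∃ τ, τ = lam / (α + β) := ⟨_, rfl⟩
  rw [← hx, ← hτ] at h
  have e1 : (α + β) * x = α * z + β * g := by rw [hx]; field_simp
  have e2 : lam = (α + β) * τ := by rw [hτ]; field_simp
  have h' := mul_le_mul_of_nonneg_left h hp.le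
  have e3 : g * β = (α + β) * x - α * z := by linarith
  rw [e2]
  linear_combination h' + (z - s) * e3

theorem aux_descent {E : Type*} [NormedAddCommGroup E] [InnerProductSpace ℝ E] [CompleteSpace E]
    (f : E → ℝ) (L : ℝ) (hf : Differentiable ℝ f)
    (hLip : ∀ x y, ‖gradient f x - gradient f y‖ ≤ L * ‖x - y‖) (x d : E) :
    f (x + d) ≤ f x + inner ℝ (gradient f x) d + L / 2 * ‖d‖ ^ 2 := by
  have hd : ∀ t : ℝ, HasDerivAt
      (fun t : ℝ => f (x + t • d) - t * inner ℝ (gradient f x) d - L / 2 * ‖d‖ ^ 2 * t ^ 2)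
      (inner ℝ (gradient f (x + t • d)) d - inner ℝ (gradient f x) d - L * ‖d‖ ^ 2 * t) t := by
    intro t
    have h1 : HasDerivAt (fun t : ℝ => x + t • d) d t := by
      simpa using ((hasDerivAt_id t).smul_const d).const_add x
    have h2 := (hf (x + t • d)).hasGradientAt.hasFDerivAt.comp_hasDerivAt t h1
    have h3 := (h2.sub ((hasDerivAt_id t).mul_const (inner ℝ (gradient f x) d))).sub
      (((hasDerivAt_id t).pow 2).const_mul (L / 2 * ‖d‖ ^ 2))
    refine HasDerivAt.congr_deriv h3 ?_
    simp only [InnerProductSpace.toDual_apply_apply, id]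
    norm_num
    ring
  have ha : AntitoneOn
      (fun t : ℝ => f (x + t • d) - t * inner ℝ (gradient f x) d - L / 2 * ‖d‖ ^ 2 * t ^ 2)
      (Set.Icc 0 1) := by
    apply antitoneOn_of_deriv_nonpos (convex_Icc 0 1)
    · exact fun t _ => (hd t).continuousAt.continuousWithinAt
    · exact fun t _ => (hd t).differentiableAt.differentiableWithinAt
    · intro t ht
      rw [interior_Icc] at ht
      rw [(hd t).deriv, ← inner_sub_left]
      have h1 := real_inner_le_norm (gradient f (x + t • d) - gradient f x) d
      have h2 := hLip (x + t • d) x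
      rw [add_sub_cancel_left, norm_smul, Real.norm_eq_abs, abs_of_pos ht.1] at h2
      have h3 := mul_le_mul_of_nonneg_right h2 (norm_nonneg d)
      linarith
  have := ha (by simp : (0:ℝ) ∈ Set.Icc (0:ℝ) 1) (by simp : (1:ℝ) ∈ Set.Icc (0:ℝ) 1) zero_le_one
  simp only [one_smul, zero_smul, add_zero] at this
  linarith

/-- (Sufficient decrease, Lemma 3, main inequality.) -/
theorem sufficient_decrease
    (n c : ℕ) (hn : 0 < n) (hc : 0 < c)
    (L lam α β : ℝ) (hL : 0 < L) (hlam : 0 < lam) (hα : 0 < α) (hβ : 0 < β)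
    (Lt : EuclideanSpace ℝ (Fin n ⊕ Fin c) → ℝ)
    (hdiff : Differentiable ℝ Lt)
    (hnonneg : ∀ x, 0 ≤ Lt x)
    (hLip : ∀ x y, ‖gradient Lt x - gradient Lt y‖ ≤ L * ‖x - y‖)
    (W : ℕ → EuclideanSpace ℝ (Fin n)) (γ ξ : ℕ → EuclideanSpace ℝ (Fin c))
    (hW : ∀ t, W (t + 1) = W t - (1 / α) • gradW Lt (W t) (γ t))
    (hγ : ∀ t, γ (t + 1) =
      (1 / (α + β)) • (α • γ t + β • ξ t) - (1 / (α + β)) • gradG Lt (W t) (γ t))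
    (hξ : ∀ t, ξ (t + 1) =
      softThresh ((1 / (α + β)) • (α • ξ t + β • γ (t + 1))) (lam / (α + β))) :
    ∀ t : ℕ,
      objF Lt lam β (W (t + 1)) (γ (t + 1)) (ξ (t + 1)) - objF Lt lam β (W t) (γ t) (ξ t) ≤
        (L - α) / 2 *
          (‖W (t + 1) - W t‖ ^ 2 + ‖γ (t + 1) - γ t‖ ^ 2 + ‖ξ (t + 1) - ξ t‖ ^ 2) := by
  intro t
  have hp : 0 < α + β := by linarith
  have hD := aux_descent Lt L hdiff hLip (pairWγ (W t) (γ t))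
    (pairWγ (W (t + 1)) (γ (t + 1)) - pairWγ (W t) (γ t))
  rw [add_sub_cancel] at hD
  have hx : ∀ i, lam * |ξ (t + 1) i| + β / 2 * (γ (t + 1) i - ξ (t + 1) i) ^ 2
      + α / 2 * (ξ (t + 1) i - ξ t i) ^ 2
      ≤ lam * |ξ t i| + β / 2 * (γ (t + 1) i - ξ t i) ^ 2 := by
    intro i
    apply aux_xi α β lam (γ (t + 1) i) (ξ t i) hα hβ hlam
    rw [hξ t]
    simp only [softThresh, PiLp.smul_apply, PiLp.add_apply, smul_eq_mul]
    rfl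
  have hX := Finset.sum_le_sum (fun i (_ : i ∈ Finset.univ) => hx i)
  have hw : ∀ i, gradient Lt (pairWγ (W t) (γ t)) (Sum.inl i) = -α * (W (t + 1) i - W t i) := by
    intro i
    rw [hW t]
    simp [gradW]
    field_simp
  have hg : ∀ i, gradient Lt (pairWγ (W t) (γ t)) (Sum.inr i) =
      -α * (γ (t + 1) i - γ t i) - β * (γ (t + 1) i - ξ t i) := by
    intro i
    have : (α + β) * γ (t + 1) i =
        α * γ t i + β * ξ t i - gradient Lt (pairWγ (W t) (γ t)) (Sum.inr i) := by
      rw [hγ t]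
      simp [gradG]
      field_simp
    linarith
  have hI : inner ℝ (gradient Lt (pairWγ (W t) (γ t)))
      (pairWγ (W (t + 1)) (γ (t + 1)) - pairWγ (W t) (γ t))
      = -α * ∑ i, (W (t + 1) i - W t i) ^ 2 +
        ∑ i, (-α * (γ (t + 1) i - γ t i) - β * (γ (t + 1) i - ξ t i)) * (γ (t + 1) i - γ t i) := by
    rw [PiLp.inner_apply, Fintype.sum_sum_type, Finset.mul_sum]
    congr 1
    · refine Finset.sum_congr rfl fun i _ => ?_
      rw [hw i]; simp [pairWγ]; ring
    · refine Finset.sum_congr rfl fun i _ => ?_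
      rw [hg i]; simp [pairWγ]; ring
  have hN : ‖pairWγ (W (t + 1)) (γ (t + 1)) - pairWγ (W t) (γ t)‖ ^ 2
      = ∑ i, (W (t + 1) i - W t i) ^ 2 + ∑ i, (γ (t + 1) i - γ t i) ^ 2 := by
    rw [EuclideanSpace.real_norm_sq_eq, Fintype.sum_sum_type]
    simp [pairWγ]
  rw [hI, hN] at hD
  have hG : ∑ i, (-α * (γ (t + 1) i - γ t i) - β * (γ (t + 1) i - ξ t i)) * (γ (t + 1) i - γ t i)
      = -(α + β / 2) * ∑ i, (γ (t + 1) i - γ t i) ^ 2 - β / 2 * ∑ i, (γ (t + 1) i - ξ t i) ^ 2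
        + β / 2 * ∑ i, (γ t i - ξ t i) ^ 2 := by
    simp only [Finset.mul_sum, ← Finset.sum_sub_distrib, ← Finset.sum_add_distrib]
    refine Finset.sum_congr rfl fun i _ => ?_
    ring
  rw [hG] at hD
  simp only [Finset.sum_add_distrib, ← Finset.mul_sum] at hX
  unfold objF
  simp only [EuclideanSpace.real_norm_sq_eq, PiLp.sub_apply]
  have p1 : 0 ≤ ∑ i, (W (t + 1) i - W t i) ^ 2 := Finset.sum_nonneg fun i _ => sq_nonneg _
  have p2 : 0 ≤ ∑ i, (γ (t + 1) i - γ t i) ^ 2 := Finset.sum_nonneg fun i _ => sq_nonneg _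
  have p3 : 0 ≤ ∑ i, (ξ (t + 1) i - ξ t i) ^ 2 := Finset.sum_nonneg fun i _ => sq_nonneg _
  have q1 := mul_nonneg hα.le p1
  have q2 := mul_nonneg hα.le p2
  have q3 := mul_nonneg hβ.le p2
  have q4 := mul_nonneg hL.le p3
  linarith
end
end

section
/- (Relative error, Lemma 4, explicit bound) For every t, define w₁ = ∇_W L̃(W^{t+1}, γ^{t+1}) − ∇_W L̃(W^t, γ^t) − α(W^{t+1} − W^t), w₂ = ∇_γ L̃(W^{t+1}, γ^{t+1}) − ∇_γ L̃(W^t, γ^t) − α(γ^{t+1} − γ^t) − β(ξ^{t+1} − ξ^t), and w₃ = −α(ξ^{t+1} − ξ^t). Then ‖w₁‖₂ + ‖w₂‖₂ + ‖w₃‖₂ ≤ (3α + 2L + β)·‖Z^{t+1} − Z^t‖₂. -/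
noncomputable section

theorem le_of_sq_le {a b : ℝ} (h : a ^ 2 ≤ b ^ 2) (hb : 0 ≤ b) : a ≤ b :=
  by
  by_contra hc
  nlinarith

theorem pairWγ_sub_sq {n c : ℕ} (W W' : EuclideanSpace ℝ (Fin n)) (γ γ' : EuclideanSpace ℝ (Fin c)) :
    ‖pairWγ W γ - pairWγ W' γ'‖ ^ 2 = ‖W - W'‖ ^ 2 + ‖γ - γ'‖ ^ 2 := by
  simp [EuclideanSpace.norm_sq_eq, pairWγ, Fintype.sum_sum_type]

theorem gradW_sub_sq {n c : ℕ} (Lt : EuclideanSpace ℝ (Fin n ⊕ Fin c) → ℝ)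
    (W W' : EuclideanSpace ℝ (Fin n)) (γ γ' : EuclideanSpace ℝ (Fin c)) :
    ‖gradW Lt W γ - gradW Lt W' γ'‖ ^ 2 + ‖gradG Lt W γ - gradG Lt W' γ'‖ ^ 2 =
    ‖gradient Lt (pairWγ W γ) - gradient Lt (pairWγ W' γ')‖ ^ 2 := by
  simp [EuclideanSpace.norm_sq_eq, gradW, gradG, Fintype.sum_sum_type]

/-- (Relative error, Lemma 4, explicit bound.) -/
theorem relative_error_bound
    (n c : ℕ) (hn : 0 < n) (hc : 0 < c)
    (L lam α β : ℝ) (hL : 0 < L) (hlam : 0 < lam) (hα : 0 < α) (hβ : 0 < β)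
    (Lt : EuclideanSpace ℝ (Fin n ⊕ Fin c) → ℝ)
    (hdiff : Differentiable ℝ Lt)
    (hLip : ∀ x y, ‖gradient Lt x - gradient Lt y‖ ≤ L * ‖x - y‖)
    (W : ℕ → EuclideanSpace ℝ (Fin n)) (γ ξ : ℕ → EuclideanSpace ℝ (Fin c))
    (hW : ∀ t, W (t + 1) = W t - (1 / α) • gradW Lt (W t) (γ t))
    (hγ : ∀ t, γ (t + 1) =
      (1 / (α + β)) • (α • γ t + β • ξ t) - (1 / (α + β)) • gradG Lt (W t) (γ t))
    (hξ : ∀ t, ξ (t + 1) =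
      softThresh ((1 / (α + β)) • (α • ξ t + β • γ (t + 1))) (lam / (α + β))) :
    ∀ t : ℕ,
      ‖gradW Lt (W (t + 1)) (γ (t + 1)) - gradW Lt (W t) (γ t) - α • (W (t + 1) - W t)‖ +
      ‖gradG Lt (W (t + 1)) (γ (t + 1)) - gradG Lt (W t) (γ t) - α • (γ (t + 1) - γ t) -
        β • (ξ (t + 1) - ξ t)‖ +
      ‖(-α) • (ξ (t + 1) - ξ t)‖ ≤
      (3 * α + 2 * L + β) *
        Real.sqrt (‖W (t + 1) - W t‖ ^ 2 + ‖γ (t + 1) - γ t‖ ^ 2 + ‖ξ (t + 1) - ξ t‖ ^ 2) := by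
  intro t
  have h1 := pairWγ_sub_sq (W (t+1)) (W t) (γ (t+1)) (γ t)
  have h2 := gradW_sub_sq Lt (W (t+1)) (W t) (γ (t+1)) (γ t)
  have h3 := hLip (pairWγ (W (t+1)) (γ (t+1))) (pairWγ (W t) (γ t))
  set N := Real.sqrt (‖W (t + 1) - W t‖ ^ 2 + ‖γ (t + 1) - γ t‖ ^ 2 + ‖ξ (t + 1) - ξ t‖ ^ 2) with hN
  have a1 : ‖W (t + 1) - W t‖ ≤ N := Real.le_sqrt_of_sq_le (by nlinarith [sq_nonneg ‖γ (t + 1) - γ t‖, sq_nonneg ‖ξ (t + 1) - ξ t‖])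
  have a2 : ‖γ (t + 1) - γ t‖ ≤ N := Real.le_sqrt_of_sq_le (by nlinarith [sq_nonneg ‖W (t + 1) - W t‖, sq_nonneg ‖ξ (t + 1) - ξ t‖])
  have a3 : ‖ξ (t + 1) - ξ t‖ ≤ N := Real.le_sqrt_of_sq_le (by nlinarith [sq_nonneg ‖γ (t + 1) - γ t‖, sq_nonneg ‖W (t + 1) - W t‖])
  have a4 : ‖pairWγ (W (t+1)) (γ (t+1)) - pairWγ (W t) (γ t)‖ ≤ N :=
    Real.le_sqrt_of_sq_le (by nlinarith [sq_nonneg ‖ξ (t + 1) - ξ t‖])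
  have a5 := h3.trans (mul_le_mul_of_nonneg_left a4 hL.le)
  have b1 : ‖gradW Lt (W (t + 1)) (γ (t + 1)) - gradW Lt (W t) (γ t)‖ ≤ L * N :=
    (le_of_sq_le (by rw [← h2]; nlinarith [sq_nonneg ‖gradW Lt (W (t + 1)) (γ (t + 1)) - gradW Lt (W t) (γ t)‖, sq_nonneg ‖gradG Lt (W (t + 1)) (γ (t + 1)) - gradG Lt (W t) (γ t)‖]) (norm_nonneg _)).trans a5
  have b2 : ‖gradG Lt (W (t + 1)) (γ (t + 1)) - gradG Lt (W t) (γ t)‖ ≤ L * N :=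
    (le_of_sq_le (by rw [← h2]; nlinarith [sq_nonneg ‖gradW Lt (W (t + 1)) (γ (t + 1)) - gradW Lt (W t) (γ t)‖, sq_nonneg ‖gradG Lt (W (t + 1)) (γ (t + 1)) - gradG Lt (W t) (γ t)‖]) (norm_nonneg _)).trans a5
  have c1 := norm_sub_le (gradW Lt (W (t + 1)) (γ (t + 1)) - gradW Lt (W t) (γ t)) (α • (W (t + 1) - W t))
  have c2 := norm_sub_le (gradG Lt (W (t + 1)) (γ (t + 1)) - gradG Lt (W t) (γ t)) (α • (γ (t + 1) - γ t))
  have c3 := norm_sub_le (gradG Lt (W (t + 1)) (γ (t + 1)) - gradG Lt (W t) (γ t) - α • (γ (t + 1) - γ t)) (β • (ξ (t + 1) - ξ t))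
  rw [norm_smul, Real.norm_of_nonneg hα.le] at c1 c2
  rw [norm_smul β, Real.norm_of_nonneg hβ.le] at c3
  rw [norm_smul (-α), norm_neg, Real.norm_of_nonneg hα.le]
  have d1 := mul_le_mul_of_nonneg_left a1 hα.le
  have d2 := mul_le_mul_of_nonneg_left a2 hα.le
  have d3 := mul_le_mul_of_nonneg_left a3 hα.le
  have d4 := mul_le_mul_of_nonneg_left a3 hβ.le
  linarith
end
end

section
/- (First sufficient descent inequality, step (24)) For every t, the proximal network-slimming iteration satisfies F(W^{t+1}, γ^{t+1}, ξ^t) − F(W^t, γ^t, ξ^t) ≤ ((L − 2α)/2)·(‖W^{t+1} − W^t‖₂² + ‖γ^{t+1} − γ^t‖₂²). -/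
noncomputable section

theorem descent_aux {E : Type*} [NormedAddCommGroup E] [InnerProductSpace ℝ E] [CompleteSpace E]
    (f : E → ℝ) (L : ℝ) (hf : Differentiable ℝ f)
    (hLip : ∀ x y, ‖gradient f x - gradient f y‖ ≤ L * ‖x - y‖) (x d : E) :
    f (x + d) - f x ≤ inner ℝ (gradient f x) d + L / 2 * ‖d‖ ^ 2 := by
  have hd : ∀ s : ℝ, HasDerivAt
      (fun s : ℝ => f (x + s • d) - s * inner ℝ (gradient f x) d - L / 2 * s ^ 2 * ‖d‖ ^ 2)
      (inner ℝ (gradient f (x + s • d)) d - inner ℝ (gradient f x) d - L * s * ‖d‖ ^ 2) s := by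
    intro s
    have h1 : HasDerivAt (fun s : ℝ => x + s • d) d s := by
      simpa using ((hasDerivAt_id s).smul_const d).const_add x
    have h2 := (hf (x + s • d)).hasGradientAt.hasFDerivAt.comp_hasDerivAt s h1
    have h3 := (h2.sub ((hasDerivAt_id s).mul_const (inner ℝ (gradient f x) d))).sub
      ((((hasDerivAt_id s).pow 2).const_mul (L / 2)).mul_const (‖d‖ ^ 2))
    refine h3.congr_deriv ?_
    rw [InnerProductSpace.toDual_apply_apply]
    simp only [id]
    push_cast
    ring
  have hanti := antitoneOn_of_deriv_nonpos (convex_Icc (0 : ℝ) 1)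
    (fun s _ => (hd s).continuousAt.continuousWithinAt)
    (fun s _ => (hd s).differentiableAt.differentiableWithinAt)
    (by
      intro s hs
      rw [interior_Icc] at hs
      rw [(hd s).deriv, ← inner_sub_left]
      have h1 := real_inner_le_norm (gradient f (x + s • d) - gradient f x) d
      have h2 := hLip (x + s • d) x
      rw [add_sub_cancel_left, norm_smul, Real.norm_of_nonneg hs.1.le] at h2
      have h3 := mul_le_mul_of_nonneg_right h2 (norm_nonneg d)
      nlinarith)
  have := hanti (Set.left_mem_Icc.2 zero_le_one) (Set.right_mem_Icc.2 zero_le_one) zero_le_one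
  simp only [zero_smul, one_smul, add_zero] at this
  linarith

/-- (First sufficient descent inequality, step (24).) -/
theorem first_sufficient_descent
    (n c : ℕ) (hn : 0 < n) (hc : 0 < c)
    (L lam α β : ℝ) (hL : 0 < L) (hlam : 0 < lam) (hα : 0 < α) (hβ : 0 < β)
    (Lt : EuclideanSpace ℝ (Fin n ⊕ Fin c) → ℝ)
    (hdiff : Differentiable ℝ Lt)
    (hLip : ∀ x y, ‖gradient Lt x - gradient Lt y‖ ≤ L * ‖x - y‖)
    (W : ℕ → EuclideanSpace ℝ (Fin n)) (γ ξ : ℕ → EuclideanSpace ℝ (Fin c))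
    (hW : ∀ t, W (t + 1) = W t - (1 / α) • gradW Lt (W t) (γ t))
    (hγ : ∀ t, γ (t + 1) =
      (1 / (α + β)) • (α • γ t + β • ξ t) - (1 / (α + β)) • gradG Lt (W t) (γ t)) :
    ∀ t : ℕ,
      objF Lt lam β (W (t + 1)) (γ (t + 1)) (ξ t) - objF Lt lam β (W t) (γ t) (ξ t) ≤
        (L - 2 * α) / 2 * (‖W (t + 1) - W t‖ ^ 2 + ‖γ (t + 1) - γ t‖ ^ 2) := by
  intro t
  have hab : α + β ≠ 0 := by positivity
  have hD := descent_aux Lt L hdiff hLip (pairWγ (W t) (γ t))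
    (pairWγ (W (t + 1)) (γ (t + 1)) - pairWγ (W t) (γ t))
  rw [add_sub_cancel] at hD
  have hw : ∀ i, gradient Lt (pairWγ (W t) (γ t)) (Sum.inl i) = -α * (W (t + 1) i - W t i) := by
    intro i
    rw [hW t]
    simp [gradW]
    field_simp
  have hg : ∀ j, gradient Lt (pairWγ (W t) (γ t)) (Sum.inr j) =
      -(α + β) * (γ (t + 1) j - γ t j) - β * (γ t j - ξ t j) := by
    intro j
    rw [hγ t]
    simp [gradG]
    field_simp
    ring
  have hnorm : ‖pairWγ (W (t + 1)) (γ (t + 1)) - pairWγ (W t) (γ t)‖ ^ 2 =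
      ‖W (t + 1) - W t‖ ^ 2 + ‖γ (t + 1) - γ t‖ ^ 2 := by
    simp [EuclideanSpace.real_norm_sq_eq, pairWγ]
  have hin : inner ℝ (gradient Lt (pairWγ (W t) (γ t)))
      (pairWγ (W (t + 1)) (γ (t + 1)) - pairWγ (W t) (γ t)) =
      -α * ‖W (t + 1) - W t‖ ^ 2 - (α + β) * ‖γ (t + 1) - γ t‖ ^ 2
        - β * inner ℝ (γ t - ξ t) (γ (t + 1) - γ t) := by
    rw [PiLp.inner_apply, Fintype.sum_sum_type]
    simp only [hw, hg, EuclideanSpace.real_norm_sq_eq, PiLp.inner_apply, Finset.mul_sum]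
    rw [sub_sub, ← Finset.sum_add_distrib, sub_eq_add_neg (Finset.sum _ _),
      ← Finset.sum_neg_distrib]
    congr 1 <;> refine Finset.sum_congr rfl fun i _ => ?_ <;> simp [pairWγ] <;> ring
  have hx : ‖γ (t + 1) - ξ t‖ ^ 2 = ‖γ t - ξ t‖ ^ 2
      + 2 * inner ℝ (γ t - ξ t) (γ (t + 1) - γ t) + ‖γ (t + 1) - γ t‖ ^ 2 := by
    rw [← norm_add_sq_real]
    congr 2
    abel
  rw [hnorm, hin] at hD
  unfold objF
  rw [hx]
  have := mul_nonneg hβ.le (sq_nonneg ‖γ (t + 1) - γ t‖)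
  nlinarith
end
end

section
/- (Second sufficient decrease inequality, step (25)) For every t, with ξ^{t+1} = S((αξ^t + βγ^{t+1})/(α + β), λ/(α + β)) being the minimizer of ξ ↦ λ‖ξ‖₁ + (α/2)‖ξ − ξ^t‖₂² + (β/2)‖γ^{t+1} − ξ‖₂², it holds that F(W^{t+1}, γ^{t+1}, ξ^{t+1}) − F(W^{t+1}, γ^{t+1}, ξ^t) ≤ −(α/2)·‖ξ^{t+1} − ξ^t‖₂². -/
noncomputable section

lemma soft_aux (x τ : ℝ) (hτ : 0 < τ) :
    (x - Real.sign x * max 0 (|x| - τ)) * (Real.sign x * max 0 (|x| - τ))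
      = τ * |Real.sign x * max 0 (|x| - τ)| ∧ |x - Real.sign x * max 0 (|x| - τ)| ≤ τ := by
  rcases le_total |x| τ with h | h
  · rw [max_eq_left (by linarith)]
    simpa using h
  · rw [max_eq_right (by linarith)]
    rcases lt_trichotomy x 0 with hx | hx | hx
    · rw [abs_of_neg hx] at *
      rw [Real.sign_of_neg hx, abs_of_nonpos (by linarith : -1 * (-x - τ) ≤ 0)]
      refine ⟨by ring, abs_le.2 ⟨by linarith, by linarith⟩⟩
    · subst hx
      simp at h
      linarith
    · rw [abs_of_pos hx] at *
      rw [Real.sign_of_pos hx, abs_of_nonneg (by linarith : 0 ≤ 1 * (x - τ))]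
      refine ⟨by ring, abs_le.2 ⟨by linarith, by linarith⟩⟩

lemma scalar_aux (l a b u g s : ℝ) (ha : 0 < a) (hb : 0 < b) (hl : 0 < l)
    (hs : s = Real.sign (1 / (a + b) * (a * u + b * g)) *
      max 0 (|1 / (a + b) * (a * u + b * g)| - l / (a + b))) :
    l * |s| + b / 2 * (g - s) ^ 2 + a / 2 * (s - u) ^ 2 ≤ l * |u| + b / 2 * (g - u) ^ 2 := by
  have hk : 0 < a + b := by linarith
  obtain ⟨h1, h2⟩ := soft_aux (1 / (a + b) * (a * u + b * g)) (l / (a + b)) (by positivity)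
  rw [← hs] at h1 h2
  have hp : 1 / (a + b) * (a * u + b * g) - s = (a * (u - s) + b * (g - s)) / (a + b) := by
    field_simp
    ring
  rw [hp] at h1 h2
  rw [abs_div, abs_of_pos hk, div_le_div_iff_of_pos_right hk] at h2
  have h3 : (a * (u - s) + b * (g - s)) * s = l * |s| := by
    field_simp at h1
    linarith
  have h4 : (a * (u - s) + b * (g - s)) * u ≤ l * |u| :=
    (le_abs_self _).trans (by rw [abs_mul]; gcongr)
  nlinarith [mul_nonneg hk.le (sq_nonneg (u - s))]

/-- (Second sufficient decrease inequality, step (25).) -/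
theorem second_sufficient_decrease
    (n c : ℕ) (hn : 0 < n) (hc : 0 < c)
    (Lt : EuclideanSpace ℝ (Fin n) → EuclideanSpace ℝ (Fin c) → ℝ)
    (lam α β : ℝ) (hlam : 0 < lam) (hα : 0 < α) (hβ : 0 < β)
    (Wt1 : EuclideanSpace ℝ (Fin n)) (γt1 ξt : EuclideanSpace ℝ (Fin c)) :
    let F : EuclideanSpace ℝ (Fin n) → EuclideanSpace ℝ (Fin c) →
        EuclideanSpace ℝ (Fin c) → ℝ := fun W γ ξ =>
      Lt W γ + lam * (∑ i, |ξ i|) + β / 2 * ‖γ - ξ‖ ^ 2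
    let ξt1 : EuclideanSpace ℝ (Fin c) :=
      softThresh ((1 / (α + β)) • (α • ξt + β • γt1)) (lam / (α + β))
    F Wt1 γt1 ξt1 - F Wt1 γt1 ξt ≤ -(α / 2) * ‖ξt1 - ξt‖ ^ 2 := by
  intro F ξt1
  have key : ∀ i, lam * |ξt1 i| + β / 2 * (γt1 i - ξt1 i) ^ 2 + α / 2 * (ξt1 i - ξt i) ^ 2
      ≤ lam * |ξt i| + β / 2 * (γt1 i - ξt i) ^ 2 := fun i =>
    scalar_aux lam α β (ξt i) (γt1 i) (ξt1 i) hα hβ hlam (by rfl)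
  have hsum := Finset.sum_le_sum (fun i (_ : i ∈ Finset.univ) => key i)
  simp only [Finset.sum_add_distrib, ← Finset.mul_sum] at hsum
  simp only [F, EuclideanSpace.norm_sq_eq, PiLp.sub_apply, Real.norm_eq_abs, sq_abs]
  linarith
end
end
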